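/- Let r ≥ 1 be an integer and α > −1, and set ν_j := α + (j−1)/r for j = 1,…,r, θ := 1/r, and c := (r−1)/(12(r+1)) − (1/(2(r+1)))·∑_{j=1}^{r} ν_j². Define d(1/r, α) := r·ζ′(−1) + ((1+(1+2α)r)/4)·ln(2π) − (1/12)·(3 + 1/r + r + 6α(1+r+αr))·ln r − ∑_{k=1}^{r} logG(1+α+k/r), d(1, α) := ζ′(−1) + ((1+α)/2)·ln(2π) − logG(2+α), and C^{MB} := G(1+α)·(2π)^{−α/2}·exp(d(1,α) − d(1/r,α))·exp( ((24α(α+2)+15+3θ+4θ²)/(24(1+θ)))·ln θ )·exp( ((6αθ − 6α(1+α) − (θ−1)²)/(12θ))·ln(1+θ) ). Then the explicit constant C defined in the context satisfies C(r; (ν₁,…,ν_r); 0; ∅) = r^{r·c} · C^{MB}. -/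

import Mathlib

open Complex Filter

noncomputable section

/-- Real logarithm of the Barnes `G`-function at `1 + x`, for `x > -1`. -/
def logBarnesG1p (x : ℝ) : ℝ :=
  x / 2 * Real.log (2 * Real.pi) - (x + x ^ 2 * (1 + Real.eulerMascheroniConstant)) / 2 +
    ∑' k : ℕ, (((k : ℝ) + 1) * Real.log (1 + x / ((k : ℝ) + 1)) - x + x ^ 2 / (2 * ((k : ℝ) + 1)))

/-- Barnes `G`-function for real `x > 0`. -/
def BarnesG (x : ℝ) : ℝ := Real.exp (logBarnesG1p (x - 1))

/-- The explicit multiplicative constant. -/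
def meijerC (r q : ℕ) (ν : Fin r → ℝ) (μ : Fin q → ℝ) : ℂ :=
  ((((∏ j, BarnesG (1 + ν j)) * ∏ k, (2 * Real.pi) ^ (μ k / 2)) /
      ((∏ k, BarnesG (1 + μ k)) * ∏ j, (2 * Real.pi) ^ (ν j / 2)) : ℝ) : ℂ) *
  Complex.exp ((1 - (r : ℂ) + (q : ℂ)) * deriv riemannZeta (-1)) *
  Complex.exp ((((1 + (r : ℝ) - q - ((r : ℝ) - q) ^ 2) / (2 * (1 + (r : ℝ) - q)) *
        ((∑ j, ν j ^ 2) - ∑ k, μ k ^ 2) +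
      (-2 + ((r : ℝ) - q) ^ 2 * ((r : ℝ) - q - 1)) / (24 * (1 + (r : ℝ) - q)) +
      (∑ j, ∑ k, if j < k then ν j * ν k else 0) +
      (∑ j, ∑ k, if j < k then μ j * μ k else 0) -
      (∑ j, ν j) * (∑ k, μ k) + ∑ k, μ k ^ 2) * Real.log ((r : ℝ) - q) : ℝ)) *
  Complex.exp (((-((2 - (r : ℝ) + q) / 2) * ((∑ j, ν j ^ 2) - ∑ k, μ k ^ 2) -
      ((r : ℝ) - q - 1) ^ 2 / 24 -
      (∑ j, ∑ k, if j < k then ν j * ν k else 0) -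
      (∑ j, ∑ k, if j < k then μ j * μ k else 0) +
      (∑ j, ν j) * (∑ k, μ k) - ∑ k, μ k ^ 2) * Real.log (1 + (r : ℝ) - q) : ℝ))

/-- The Muttalib--Borodin parameters `ν_j = α + (j-1)/r`, `j = 1,…,r`. -/
def nuMB (r : ℕ) (α : ℝ) : Fin r → ℝ := fun j => α + (j : ℝ) / r

/-- The coefficient `c` of `ln s`. -/
def cMB (r : ℕ) (α : ℝ) : ℝ :=
  ((r : ℝ) - 1) / (12 * ((r : ℝ) + 1)) - 1 / (2 * ((r : ℝ) + 1)) * ∑ j, nuMB r α j ^ 2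

/-- The regularized sum `d(1/r, α)`. -/
def dThetaMB (r : ℕ) (α : ℝ) : ℂ :=
  (r : ℂ) * deriv riemannZeta (-1) +
    (((1 + (1 + 2 * α) * r) / 4 * Real.log (2 * Real.pi) : ℝ) : ℂ) -
    ((1 / 12 * (3 + 1 / (r : ℝ) + r + 6 * α * (1 + r + α * r)) * Real.log r : ℝ) : ℂ) -
    ∑ k : Fin r, ((logBarnesG1p (α + ((k : ℝ) + 1) / r) : ℝ) : ℂ)

/-- The regularized sum `d(1, α)`. -/
def dOneMB (α : ℝ) : ℂ :=
  deriv riemannZeta (-1) + (((1 + α) / 2 * Real.log (2 * Real.pi) : ℝ) : ℂ) -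
    ((logBarnesG1p (1 + α) : ℝ) : ℂ)

/-- The Muttalib--Borodin constant `C^{MB}(1/r, α)`. -/
def CmbMB (r : ℕ) (α : ℝ) : ℂ :=
  ((BarnesG (1 + α) * (2 * Real.pi) ^ (-(α / 2)) : ℝ) : ℂ) *
    Complex.exp (dOneMB α - dThetaMB r α) *
    Complex.exp
      (((24 * α * (α + 2) + 15 + 3 * (1 / (r : ℝ)) + 4 * (1 / (r : ℝ)) ^ 2) /
          (24 * (1 + 1 / (r : ℝ))) * Real.log (1 / (r : ℝ)) : ℝ)) *
    Complex.exp
      (((6 * α * (1 / (r : ℝ)) - 6 * α * (1 + α) - (1 / (r : ℝ) - 1) ^ 2) /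
          (12 * (1 / (r : ℝ))) * Real.log (1 + 1 / (r : ℝ)) : ℝ))

/-!
Since `2 e₂ + p₂ = p₁²` for the elementary symmetric polynomial `e₂` and the power sums `p₁`, `p₂`,
the two exponents in `meijerC r q ν μ` depend on the parameters only through `d = r - q` and the
differences of the first two power sums of `ν` and `μ`. On the Muttalib–Borodin side, moving from
`∑ logG(1 + ν_j)` to `∑ logG(1 + α + k/r)` replaces the first term `logG(1 + α)` by `logG(2 + α)`;
these are the two extra Barnes factors of `CmbMB`, so they cancel. Both constants then have the form
`∏ G(1 + ν_j) · (2π)^(-p₁/2) · r^a · (1 + r)^b · exp((1 - r) ζ′(-1))`, with equal `b` and with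
values of `a` that differ by `r c`.
-/

theorem two_mul_sum_sum_ite_lt_mul_add_sum_sq {ι R : Type*} [Fintype ι] [LinearOrder ι]
    [CommSemiring R] (f : ι → R) :
    2 * (∑ i, ∑ j, if i < j then f i * f j else 0) + ∑ i, f i ^ 2 = (∑ i, f i) ^ 2 := by
  have lower_eq_upper : (∑ i, ∑ j, if j < i then f i * f j else 0) =
      ∑ i, ∑ j, if i < j then f i * f j else 0 := by
    rw [Finset.sum_comm]
    simp only [mul_comm]
  have diagonal : ∑ i, f i ^ 2 = ∑ i, ∑ j, if i = j then f i * f j else 0 := by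
    simp [sq]
  rw [two_mul]
  nth_rw 2 [← lower_eq_upper]
  rw [diagonal, sq, Fintype.sum_mul_sum]
  simp only [← Finset.sum_add_distrib]
  refine Finset.sum_congr rfl fun i _ => Finset.sum_congr rfl fun j _ => ?_
  rcases lt_trichotomy i j with h | h | h
  · simp [h, h.not_gt, h.ne]
  · simp [h]
  · simp [h, h.not_gt, h.ne']

theorem two_mul_sum_range_add_mul {R : Type*} [CommRing R] (a d : R) (n : ℕ) :
    2 * ∑ i ∈ Finset.range n, (a + i * d) = n * (2 * a + (n - 1) * d) := by
  induction n with
  | zero => simp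
  | succ n ih =>
    rw [Finset.sum_range_succ, mul_add, ih]
    push_cast
    ring

theorem six_mul_sum_range_add_mul_sq {R : Type*} [CommRing R] (a d : R) (n : ℕ) :
    6 * ∑ i ∈ Finset.range n, (a + i * d) ^ 2 =
      n * (6 * a ^ 2 + 6 * (n - 1) * a * d + (n - 1) * (2 * n - 1) * d ^ 2) := by
  induction n with
  | zero => simp
  | succ n ih =>
    rw [Finset.sum_range_succ, mul_add, ih]
    push_cast
    ring

theorem prod_BarnesG_one_add {ι : Type*} (s : Finset ι) (f : ι → ℝ) :
    ∏ i ∈ s, BarnesG (1 + f i) = Real.exp (∑ i ∈ s, logBarnesG1p (f i)) := by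
  simp [BarnesG, Real.exp_sum]

/-- The exponent of `r - q` in `meijerC r q ν μ`, as a function of `d = r - q` and the differences
`p₁ = ∑ ν_j - ∑ μ_k` and `p₂ = ∑ ν_j² - ∑ μ_k²` of power sums. -/
def meijerExponent (d p₁ p₂ : ℝ) : ℝ :=
  p₁ ^ 2 / 2 - d ^ 2 / (2 * (1 + d)) * p₂ + (d ^ 2 * (d - 1) - 2) / (24 * (1 + d))

/-- The exponent of `1 + r - q` in `meijerC r q ν μ`, in the variables of `meijerExponent`. -/
def meijerExponentSucc (d p₁ p₂ : ℝ) : ℝ :=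
  (d - 1) / 2 * p₂ - p₁ ^ 2 / 2 - (d - 1) ^ 2 / 24

theorem meijerC_eq_mul_rpow {r q : ℕ} (hqr : q < r) (ν : Fin r → ℝ) (μ : Fin q → ℝ) :
    meijerC r q ν μ =
      (((∏ j, BarnesG (1 + ν j)) / (∏ k, BarnesG (1 + μ k)) *
        (2 * Real.pi) ^ (-((∑ j, ν j - ∑ k, μ k) / 2)) *
        ((r : ℝ) - q) ^
          meijerExponent (r - q) (∑ j, ν j - ∑ k, μ k) (∑ j, ν j ^ 2 - ∑ k, μ k ^ 2) *
        (1 + (r : ℝ) - q) ^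
          meijerExponentSucc (r - q) (∑ j, ν j - ∑ k, μ k) (∑ j, ν j ^ 2 - ∑ k, μ k ^ 2) : ℝ) : ℂ) *
      Complex.exp ((1 - (r : ℂ) + q) * deriv riemannZeta (-1)) := by
  have d_pos : 0 < (r : ℝ) - q := sub_pos.2 (by exact_mod_cast hqr)
  have one_add_d_pos : 0 < 1 + (r : ℝ) - q := by linarith
  have one_add_d_ne_zero : 1 + ((r : ℝ) - q) ≠ 0 := by linarith
  have pairs_ν : (∑ i, ∑ j, if i < j then ν i * ν j else 0) =
      ((∑ j, ν j) ^ 2 - ∑ j, ν j ^ 2) / 2 := by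
    linarith [two_mul_sum_sum_ite_lt_mul_add_sum_sq ν]
  have pairs_μ : (∑ i, ∑ j, if i < j then μ i * μ j else 0) =
      ((∑ k, μ k) ^ 2 - ∑ k, μ k ^ 2) / 2 := by
    linarith [two_mul_sum_sum_ite_lt_mul_add_sum_sq μ]
  have two_pi_rpow : (2 * Real.pi) ^ (-((∑ j, ν j - ∑ k, μ k) / 2)) =
      (∏ k, (2 * Real.pi) ^ (μ k / 2)) / ∏ j, (2 * Real.pi) ^ (ν j / 2) := by
    simp only [← Real.rpow_sum_of_pos Real.two_pi_pos, ← Real.rpow_sub Real.two_pi_pos,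
      ← Finset.sum_div]
    ring_nf
  rw [meijerC, pairs_ν, pairs_μ, two_pi_rpow, Real.rpow_def_of_pos d_pos,
    Real.rpow_def_of_pos one_add_d_pos, ← div_mul_div_comm, mul_right_comm (Complex.ofReal _),
    mul_right_comm (Complex.ofReal _ * _), ← Complex.ofReal_exp, ← Complex.ofReal_exp,
    ← Complex.ofReal_mul, ← Complex.ofReal_mul, mul_comm (Real.log _), mul_comm (Real.log _)]
  congr 3
  · congr 3
    rw [meijerExponent]
    field
  · congr 2
    rw [meijerExponentSucc]
    ring

theorem sum_comp_nuMB_add_comp_one_add {M : Type*} [AddCommMonoid M] {r : ℕ} (hr : 0 < r) (α : ℝ)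
    (f : ℝ → M) :
    ∑ j, f (nuMB r α j) + f (1 + α) = f α + ∑ k : Fin r, f (α + ((k : ℝ) + 1) / r) := by
  have split_last_eq_split_first :=
    (Fin.sum_univ_castSucc fun k : Fin (r + 1) => f (α + (k : ℝ) / r)).symm.trans
      (Fin.sum_univ_succ _)
  simpa [nuMB, hr.ne', add_comm α 1] using split_last_eq_split_first

theorem sum_nuMB {r : ℕ} (hr : 0 < r) (α : ℝ) : ∑ j, nuMB r α j = r * α + ((r : ℝ) - 1) / 2 := by
  simp only [nuMB, div_eq_mul_inv]
  rw [Fin.sum_univ_eq_sum_range fun j => α + (j : ℝ) * (r : ℝ)⁻¹,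
    ← mul_right_inj' two_ne_zero, two_mul_sum_range_add_mul]
  field

theorem sum_nuMB_sq {r : ℕ} (hr : 0 < r) (α : ℝ) :
    ∑ j, nuMB r α j ^ 2 =
      r * α ^ 2 + ((r : ℝ) - 1) * α + ((r : ℝ) - 1) * (2 * r - 1) / (6 * r) := by
  simp only [nuMB, div_eq_mul_inv]
  rw [Fin.sum_univ_eq_sum_range fun j => (α + (j : ℝ) * (r : ℝ)⁻¹) ^ 2,
    ← mul_right_inj' (by norm_num : (6 : ℝ) ≠ 0), six_mul_sum_range_add_mul_sq]
  field

theorem meijerExponentSucc_nuMB {r : ℕ} (hr : 0 < r) (α : ℝ) :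
    meijerExponentSucc r (∑ j, nuMB r α j) (∑ j, nuMB r α j ^ 2) =
      (6 * α * (1 / (r : ℝ)) - 6 * α * (1 + α) - (1 / (r : ℝ) - 1) ^ 2) /
        (12 * (1 / (r : ℝ))) := by
  rw [meijerExponentSucc, sum_nuMB hr, sum_nuMB_sq hr]
  field

-- The last term comes from `log (1 + 1 / r) = log (1 + r) - log r`.
theorem meijerExponent_nuMB_sub_mul_cMB {r : ℕ} (hr : 0 < r) (α : ℝ) :
    meijerExponent r (∑ j, nuMB r α j) (∑ j, nuMB r α j ^ 2) - r * cMB r α =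
      1 / 12 * (3 + 1 / (r : ℝ) + r + 6 * α * (1 + r + α * r)) -
        (24 * α * (α + 2) + 15 + 3 * (1 / (r : ℝ)) + 4 * (1 / (r : ℝ)) ^ 2) /
          (24 * (1 + 1 / (r : ℝ))) -
        meijerExponentSucc r (∑ j, nuMB r α j) (∑ j, nuMB r α j ^ 2) := by
  have one_add_ne_zero : 1 + (r : ℝ) ≠ 0 := by positivity
  rw [meijerExponentSucc_nuMB hr, meijerExponent, cMB, sum_nuMB hr, sum_nuMB_sq hr]
  field

theorem dOneMB_sub_dThetaMB {r : ℕ} (hr : 0 < r) (α : ℝ) :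
    dOneMB α - dThetaMB r α = (1 - (r : ℂ)) * deriv riemannZeta (-1) +
      ((∑ j, logBarnesG1p (nuMB r α j) - logBarnesG1p α +
        Real.log (2 * Real.pi) * ((α - ∑ j, nuMB r α j) / 2) +
        Real.log r * (1 / 12 * (3 + 1 / (r : ℝ) + r + 6 * α * (1 + r + α * r))) : ℝ) : ℂ) := by
  have shift : ∑ k : Fin r, logBarnesG1p (α + ((k : ℝ) + 1) / r) =
      ∑ j, logBarnesG1p (nuMB r α j) + logBarnesG1p (1 + α) - logBarnesG1p α := by
    linarith [sum_comp_nuMB_add_comp_one_add hr α logBarnesG1p]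
  rw [dOneMB, dThetaMB, ← Complex.ofReal_sum, shift, sum_nuMB hr]
  push_cast
  ring

theorem CmbMB_eq_mul_rpow {r : ℕ} (hr : 0 < r) (α : ℝ) :
    CmbMB r α =
      (((∏ j, BarnesG (1 + nuMB r α j)) * (2 * Real.pi) ^ (-((∑ j, nuMB r α j) / 2)) *
        (r : ℝ) ^ (meijerExponent r (∑ j, nuMB r α j) (∑ j, nuMB r α j ^ 2) - r * cMB r α) *
        (1 + (r : ℝ)) ^ meijerExponentSucc r (∑ j, nuMB r α j) (∑ j, nuMB r α j ^ 2) : ℝ) : ℂ) *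
      Complex.exp ((1 - (r : ℂ)) * deriv riemannZeta (-1)) := by
  have r_pos : 0 < (r : ℝ) := by exact_mod_cast hr
  have one_add_pos : 0 < 1 + (r : ℝ) := by positivity
  have log_theta : Real.log (1 / (r : ℝ)) = -Real.log r := by
    rw [one_div, Real.log_inv]
  have log_one_add_theta : Real.log (1 + 1 / (r : ℝ)) = Real.log (1 + r) - Real.log r := by
    rw [← Real.log_div one_add_pos.ne' r_pos.ne']
    congr 1
    field
  rw [CmbMB, dOneMB_sub_dThetaMB hr, log_theta, log_one_add_theta,
    ← meijerExponentSucc_nuMB hr, meijerExponent_nuMB_sub_mul_cMB hr, prod_BarnesG_one_add,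
    BarnesG, add_sub_cancel_left, Real.rpow_def_of_pos Real.two_pi_pos,
    Real.rpow_def_of_pos Real.two_pi_pos, Real.rpow_def_of_pos r_pos,
    Real.rpow_def_of_pos one_add_pos]
  simp only [Complex.ofReal_mul, Complex.ofReal_exp, ← Complex.exp_add]
  push_cast
  ring_nf

/-- consistency with the Muttalib--Borodin constant. -/
theorem meijerC_muttalib_borodin (r : ℕ) (hr : 1 ≤ r) (α : ℝ) (hα : -1 < α) :
    meijerC r 0 (nuMB r α) Fin.elim0 =
      (((r : ℝ) ^ ((r : ℝ) * cMB r α) : ℝ) : ℂ) * CmbMB r α := by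
  have r_rpow_exponent :
      (r : ℝ) ^ meijerExponent r (∑ j, nuMB r α j) (∑ j, nuMB r α j ^ 2) =
        (r : ℝ) ^ (r * cMB r α) *
          (r : ℝ) ^ (meijerExponent r (∑ j, nuMB r α j) (∑ j, nuMB r α j ^ 2) - r * cMB r α) := by
    rw [← Real.rpow_add (Nat.cast_pos.2 hr), add_sub_cancel]
  rw [meijerC_eq_mul_rpow hr, CmbMB_eq_mul_rpow hr]
  simp only [Nat.cast_zero, sub_zero, add_zero, Finset.univ_eq_empty, Finset.sum_empty,
    Finset.prod_empty, div_one, r_rpow_exponent]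
  push_cast
  ring
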